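/- One-sided Lipschitz property of the damped collision operator: let N ≥ 0, ν > 0, M, M' > 0, and let V_M be a set of nonnegative functions in L¹(ℝ^d) ∩ L¹_{N+2}(ℝ^d) with L¹_{N+2}-norms bounded above by M and L¹-norms bounded below by M'. Define Q̃[f] = Q[f] − 2ν|k|²f. Then there exists a constant C_N > 0 such that for all f, g ∈ V_M, the bracket with respect to the L¹_N norm satisfies [Q̃[f] − Q̃[g], f − g] ≤ C_N ‖f − g‖_{L¹_N}, where [φ,ψ] := lim_{h→0⁻} h⁻¹(‖ψ + hφ‖_{L¹_N} − ‖ψ‖_{L¹_N}); in particular [φ,ψ] ≤ ∫_{ℝ^d} φ(k)·sign(ψ(k))·ω_k^N dk. -/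

import Mathlib

noncomputable section
open MeasureTheory Filter Set Real

abbrev Sp (d : ℕ) : Type := EuclideanSpace ℝ (Fin d)

/-- Dispersion relation ω_k = √(λ1 + λ2 |k|²). -/
def omg (l1 l2 : ℝ) {d : ℕ} (k : Sp d) : ℝ := Real.sqrt (l1 + l2 * ‖k‖ ^ 2)

/-- Zeroth moment 𝔐₀[f] = ∫ f. -/
def M0 {d : ℕ} (f : Sp d → ℝ) : ℝ := ∫ k, f k

/-- Resonance broadening Γ_{k,k1,k2}[f]. -/
def Gam {d : ℕ} (f : Sp d → ℝ) (k k1 k2 : Sp d) : ℝ :=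
  (‖k‖ ^ 2 + ‖k1‖ ^ 2 + ‖k2‖ ^ 2) * M0 f

/-- Lorentzian L_f(ζ; k,k1,k2) = Γ/(ζ² + Γ²). -/
def Lor {d : ℕ} (f : Sp d → ℝ) (z : ℝ) (k k1 k2 : Sp d) : ℝ :=
  Gam f k k1 k2 / (z ^ 2 + Gam f k k1 k2 ^ 2)

/-- Collision kernel |V_{k,k1,k2}|² = |k||k1||k2|. -/
def Vsq {d : ℕ} (k k1 k2 : Sp d) : ℝ := ‖k‖ * ‖k1‖ * ‖k2‖

/-- Collision operator Q[f] after eliminating the Dirac delta enforcing k = k1 + k2. -/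
def Qop (l1 l2 : ℝ) {d : ℕ} (f : Sp d → ℝ) (k : Sp d) : ℝ :=
  (∫ k1, Vsq k k1 (k - k1) *
      Lor f (omg l1 l2 k - omg l1 l2 k1 - omg l1 l2 (k - k1)) k k1 (k - k1) *
      (f k1 * f (k - k1) - f k * f k1 - f k * f (k - k1)))
  - 2 * ∫ k2, Vsq (k + k2) k k2 *
      Lor f (omg l1 l2 (k + k2) - omg l1 l2 k - omg l1 l2 k2) (k + k2) k k2 *
      (f k * f k2 - f k * f (k + k2) - f (k + k2) * f k2)

/-- Weighted L¹ norm ‖g‖_{L¹_N} = ∫ |g| ω^N. -/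
def wnorm (l1 l2 N : ℝ) {d : ℕ} (g : Sp d → ℝ) : ℝ := ∫ k, |g k| * omg l1 l2 k ^ N

/-- N-th moment 𝔐_N[g] = ∫ ω^N g. -/
def Mom (l1 l2 N : ℝ) {d : ℕ} (g : Sp d → ℝ) : ℝ := ∫ k, omg l1 l2 k ^ N * g k

/-- Damped collision operator Q̃[f] = Q[f] − 2ν|k|²f. -/
def Qt (l1 l2 ν : ℝ) {d : ℕ} (f : Sp d → ℝ) (k : Sp d) : ℝ :=
  Qop l1 l2 f k - 2 * ν * ‖k‖ ^ 2 * f k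

lemma omg_pos' {l1 l2 : ℝ} (hl1 : 0 < l1) (hl2 : 0 < l2) {d : ℕ} (k : Sp d) : 0 < omg l1 l2 k := by
  unfold omg; positivity

lemma omg_meas (l1 l2 : ℝ) {d : ℕ} : Measurable (fun k : Sp d => omg l1 l2 k) := by
  unfold omg; fun_prop

lemma abs_sub_ge (a b h : ℝ) : h * (b * Real.sign a) ≤ |a + h * b| - |a| := by
  rcases lt_trichotomy a 0 with ha | ha | ha
  · rw [Real.sign_of_neg ha, abs_of_neg ha]
    have := neg_abs_le (a + h * b)
    linarith
  · subst ha
    simp only [Real.sign_zero, mul_zero, zero_add, abs_zero, sub_zero]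
    positivity
  · rw [Real.sign_of_pos ha, abs_of_pos ha]
    have := le_abs_self (a + h * b)
    linarith

lemma part_one {d : ℕ} (l1 l2 N : ℝ) (hl1 : 0 < l1) (hl2 : 0 < l2) (φ ψ : Sp d → ℝ)
    (hφ : Integrable (fun k => |φ k| * omg l1 l2 k ^ N))
    (hψ : Integrable (fun k => |ψ k| * omg l1 l2 k ^ N)) (L : ℝ)
    (hL : Filter.Tendsto
          (fun h : ℝ =>
            (wnorm l1 l2 N (fun k => ψ k + h * φ k) - wnorm l1 l2 N ψ) / h)
          (nhdsWithin 0 (Set.Iio 0)) (nhds L)) :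
    L ≤ ∫ k, φ k * Real.sign (ψ k) * omg l1 l2 k ^ N := by
  have hw : ∀ k : Sp d, 0 < omg l1 l2 k ^ N := fun k => Real.rpow_pos_of_pos (omg_pos' hl1 hl2 k) _
  have hwm : Measurable (fun k : Sp d => omg l1 l2 k ^ N) := (omg_meas l1 l2).pow_const N
  have h0 : 0 ≤ wnorm l1 l2 N ψ := integral_nonneg fun k => mul_nonneg (abs_nonneg _) (hw k).le
  rcases h0.eq_or_lt with h0 | h0
  · -- ψ = 0 a.e.
    have hz : ∀ᵐ k : Sp d, ψ k = 0 := by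
      have := (integral_eq_zero_iff_of_nonneg (fun k => mul_nonneg (abs_nonneg _) (hw k).le) hψ).1 h0.symm
      filter_upwards [this] with k hk
      have : |ψ k| * omg l1 l2 k ^ N = 0 := hk
      rcases mul_eq_zero.1 this with h | h
      · exact abs_eq_zero.1 h
      · exact absurd h (hw k).ne'
    have e : ∫ k, φ k * Real.sign (ψ k) * omg l1 l2 k ^ N = 0 := by
      rw [integral_eq_zero_of_ae]
      filter_upwards [hz] with k hk
      simp [hk]
    rw [e]
    refine le_of_tendsto hL ?_
    filter_upwards [self_mem_nhdsWithin] with h hh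
    rw [← h0, sub_zero]
    refine div_nonpos_of_nonneg_of_nonpos (integral_nonneg fun k => mul_nonneg (abs_nonneg _) (hw k).le) (le_of_lt hh)
  · -- eventually integrable
    have hev : ∀ᶠ h : ℝ in nhdsWithin 0 (Set.Iio 0),
        Integrable (fun k => |ψ k + h * φ k| * omg l1 l2 k ^ N) := by
      have h1 : ∀ᶠ h : ℝ in nhdsWithin 0 (Set.Iio 0),
        (wnorm l1 l2 N (fun k => ψ k + h * φ k) - wnorm l1 l2 N ψ) / h < |L| + 1 :=
        hL.eventually_lt_const (by linarith [le_abs_self L])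
      have hpos : 0 < wnorm l1 l2 N ψ / (|L| + 1) := by positivity
      have h2 : ∀ᶠ h : ℝ in nhdsWithin 0 (Set.Iio 0), -(wnorm l1 l2 N ψ / (|L| + 1)) < h :=
        nhdsWithin_le_nhds (lt_mem_nhds (by linarith))
      filter_upwards [h1, h2, self_mem_nhdsWithin] with h h1 h2 h3
      by_contra hni
      have e : wnorm l1 l2 N (fun k => ψ k + h * φ k) = 0 := integral_undef hni
      have h3 : h < 0 := h3
      rw [e, zero_sub, div_lt_iff_of_neg h3] at h1
      have hA : 0 < |L| + 1 := by positivity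
      have : -wnorm l1 l2 N ψ < h * (|L| + 1) := by
        rw [← neg_div, div_lt_iff₀ hA] at h2
        exact h2
      linarith
    have hsm : AEStronglyMeasurable (fun k => φ k * Real.sign (ψ k) * omg l1 l2 k ^ N) volume := by
      obtain ⟨h, hi, hh⟩ := (hev.and self_mem_nhdsWithin).exists
      have hh : h < 0 := hh
      have m1 := hφ.aestronglyMeasurable.aemeasurable
      have m2 := hψ.aestronglyMeasurable.aemeasurable
      have m3 := hi.aestronglyMeasurable.aemeasurable
      have : (fun k => φ k * Real.sign (ψ k) * omg l1 l2 k ^ N) = fun k =>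
          (((|ψ k + h * φ k| * omg l1 l2 k ^ N) ^ 2 - (|ψ k| * omg l1 l2 k ^ N) ^ 2
            - h ^ 2 * (|φ k| * omg l1 l2 k ^ N) ^ 2) / (2 * h)) / (|ψ k| * omg l1 l2 k ^ N) := by
        funext k
        have hk := hw k
        simp only [mul_pow, sq_abs]
        rcases lt_trichotomy (ψ k) 0 with ha | ha | ha
        · rw [Real.sign_of_neg ha, abs_of_neg ha]
          have := hh.ne
          have := ha.ne
          field_simp
          ring
        · simp [ha]
        · rw [Real.sign_of_pos ha, abs_of_pos ha]
          have := hh.ne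
          have := ha.ne'
          field_simp
          ring
      rw [this]
      exact ((((m3.pow_const 2).sub (m2.pow_const 2)).sub ((m1.pow_const 2).const_mul _)).div_const _
        |>.div m2).aestronglyMeasurable
    have hIntg : Integrable (fun k => φ k * Real.sign (ψ k) * omg l1 l2 k ^ N) := by
      refine hφ.mono hsm (Eventually.of_forall fun k => ?_)
      simp only [norm_mul, Real.norm_eq_abs, abs_abs]
      refine mul_le_mul_of_nonneg_right ?_ (abs_nonneg _)
      rcases Real.sign_apply_eq (ψ k) with h | h | h <;> simp [h]
    refine le_of_tendsto hL ?_
    filter_upwards [hev, self_mem_nhdsWithin] with h hi hh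
    have hh : h < 0 := hh
    rw [div_le_iff_of_neg hh]
    unfold wnorm
    rw [← integral_sub hi hψ, ← integral_mul_const]
    refine integral_mono (hIntg.mul_const h) (hi.sub hψ) fun k => ?_
    have := mul_le_mul_of_nonneg_right (abs_sub_ge (ψ k) (φ k) h) (hw k).le
    simp only
    linarith

lemma lor_le {m Γ z : ℝ} (hm : 0 < m) (h : m ≤ Γ) : Γ / (z ^ 2 + Γ ^ 2) ≤ 1 / m := by
  have hΓ : 0 < Γ := hm.trans_le h
  rw [div_le_div_iff₀ (by positivity) hm]
  nlinarith [sq_nonneg z]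

lemma lor_diff {Γ Δ z : ℝ} (hΓ : 0 < Γ) (hΔ : 0 < Δ) :
    |Γ / (z ^ 2 + Γ ^ 2) - Δ / (z ^ 2 + Δ ^ 2)| ≤ |Γ - Δ| / (Γ * Δ) := by
  have e : Γ / (z ^ 2 + Γ ^ 2) - Δ / (z ^ 2 + Δ ^ 2)
      = (Γ - Δ) * (z ^ 2 - Γ * Δ) / ((z ^ 2 + Γ ^ 2) * (z ^ 2 + Δ ^ 2)) := by
    field_simp; ring
  have hq : 0 < Γ * Δ := by positivity
  rw [e, abs_div, abs_mul, abs_of_pos (show 0 < (z ^ 2 + Γ ^ 2) * (z ^ 2 + Δ ^ 2) by positivity),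
    div_le_div_iff₀ (by positivity) hq, mul_assoc]
  refine mul_le_mul_of_nonneg_left ?_ (abs_nonneg _)
  have h1 : |z ^ 2 - Γ * Δ| ≤ z ^ 2 + Γ * Δ := by
    rw [abs_le]; constructor <;> nlinarith [sq_nonneg z]
  calc |z ^ 2 - Γ * Δ| * (Γ * Δ) ≤ (z ^ 2 + Γ * Δ) * (Γ * Δ) := by gcongr
    _ ≤ _ := by
      nlinarith [mul_nonneg (sq_nonneg z) (sq_nonneg (Γ - Δ)), mul_nonneg (sq_nonneg z) hq.le, sq_nonneg (z ^ 2)]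

/-- the kernel envelope -/
def env {d : ℕ} (a b c : Sp d) : ℝ := Vsq a b c / (‖a‖ ^ 2 + ‖b‖ ^ 2 + ‖c‖ ^ 2)

lemma env_nonneg {d : ℕ} (a b c : Sp d) : 0 ≤ env a b c := by unfold env Vsq; positivity

lemma tri_aux {x y w : ℝ} (hw : 0 ≤ w) :
    x * y * w / (x ^ 2 + y ^ 2 + w ^ 2) ≤ w := by
  apply div_le_of_le_mul₀ (by positivity) hw
  have : x * y ≤ x ^ 2 + y ^ 2 + w ^ 2 := by nlinarith [sq_nonneg (x - y), sq_nonneg w, sq_nonneg x, sq_nonneg y]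
  nlinarith

lemma env_le3 {d : ℕ} (a b c : Sp d) : env a b c ≤ ‖c‖ :=
  tri_aux (norm_nonneg _)

lemma env_le2 {d : ℕ} (a b c : Sp d) : env a b c ≤ ‖b‖ := by
  have := tri_aux (x := ‖a‖) (y := ‖c‖) (norm_nonneg b)
  unfold env Vsq
  convert this using 2 <;> ring

lemma env_le1 {d : ℕ} (a b c : Sp d) : env a b c ≤ ‖a‖ := by
  have := tri_aux (x := ‖b‖) (y := ‖c‖) (norm_nonneg a)
  unfold env Vsq
  convert this using 2 <;> ring

lemma ker_le {d : ℕ} {f : Sp d → ℝ} {m : ℝ} (hm : 0 < m) (hf : m ≤ M0 f) (z : ℝ) (a b c : Sp d) :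
    |Vsq a b c * Lor f z a b c| ≤ env a b c * (1 / m) := by
  have hV : 0 ≤ Vsq a b c := by unfold Vsq; positivity
  have hM : 0 < M0 f := hm.trans_le hf
  have hL : 0 ≤ Lor f z a b c := by unfold Lor Gam; positivity
  rw [abs_of_nonneg (mul_nonneg hV hL)]
  rcases (show 0 ≤ ‖a‖ ^ 2 + ‖b‖ ^ 2 + ‖c‖ ^ 2 by positivity).eq_or_lt with hS | hS
  · have : Lor f z a b c = 0 := by unfold Lor Gam; rw [← hS]; simp
    rw [this, mul_zero]
    exact mul_nonneg (env_nonneg _ _ _) (by positivity)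
  · unfold env
    rw [div_mul_eq_mul_div, mul_div_assoc, div_div]
    refine mul_le_mul_of_nonneg_left ?_ hV
    unfold Lor Gam
    rw [mul_comm m]
    exact lor_le (by positivity) (by gcongr)

lemma ker_diff {d : ℕ} {f g : Sp d → ℝ} {m : ℝ} (hm : 0 < m) (hf : m ≤ M0 f) (hg : m ≤ M0 g)
    (z : ℝ) (a b c : Sp d) :
    |Vsq a b c * Lor f z a b c - Vsq a b c * Lor g z a b c|
      ≤ env a b c * (|M0 f - M0 g| * (1 / m) ^ 2) := by
  have hV : 0 ≤ Vsq a b c := by unfold Vsq; positivity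
  have hMf : 0 < M0 f := hm.trans_le hf
  have hMg : 0 < M0 g := hm.trans_le hg
  rw [← mul_sub, abs_mul, abs_of_nonneg hV]
  rcases (show 0 ≤ ‖a‖ ^ 2 + ‖b‖ ^ 2 + ‖c‖ ^ 2 by positivity).eq_or_lt with hS | hS
  · have : Lor f z a b c - Lor g z a b c = 0 := by unfold Lor Gam; rw [← hS]; simp
    rw [this, abs_zero, mul_zero]
    exact mul_nonneg (env_nonneg _ _ _) (by positivity)
  · unfold env
    rw [div_mul_eq_mul_div, mul_div_assoc]
    refine mul_le_mul_of_nonneg_left ?_ hV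
    unfold Lor Gam
    set S := ‖a‖ ^ 2 + ‖b‖ ^ 2 + ‖c‖ ^ 2
    refine (lor_diff (by positivity) (by positivity)).trans ?_
    rw [← mul_sub, abs_mul, abs_of_pos hS]
    calc S * |M0 f - M0 g| / (S * M0 f * (S * M0 g)) = |M0 f - M0 g| / (M0 f * M0 g) / S := by
          field_simp
      _ ≤ |M0 f - M0 g| / (m * m) / S := by gcongr
      _ = _ := by field_simp

lemma omg_sq {l1 l2 : ℝ} (hl1 : 0 < l1) (hl2 : 0 < l2) {d : ℕ} (k : Sp d) :
    omg l1 l2 k ^ 2 = l1 + l2 * ‖k‖ ^ 2 := by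
  unfold omg; rw [Real.sq_sqrt]; positivity

lemma omg_tri {l1 l2 : ℝ} (hl1 : 0 < l1) (hl2 : 0 < l2) {d : ℕ} (x y z : Sp d)
    (h : ‖z‖ ≤ ‖x‖ + ‖y‖) : omg l1 l2 z ≤ omg l1 l2 x + omg l1 l2 y := by
  have hx := omg_pos' hl1 hl2 x
  have hy := omg_pos' hl1 hl2 y
  refine (sq_le_sq₀ (omg_pos' hl1 hl2 z).le (by positivity)).1 ?_
  have h2 : l2 * (‖x‖ * ‖y‖) ≤ omg l1 l2 x * omg l1 l2 y := by
    refine (sq_le_sq₀ (by positivity) (by positivity)).1 ?_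
    rw [mul_pow (omg l1 l2 x), omg_sq hl1 hl2, omg_sq hl1 hl2]
    have : 0 ≤ l1 * l1 + l1 * (l2 * ‖y‖ ^ 2) + l2 * ‖x‖ ^ 2 * l1 := by positivity
    nlinarith
  have h3 : ‖z‖ ^ 2 ≤ (‖x‖ + ‖y‖) ^ 2 := by gcongr
  rw [add_sq, omg_sq hl1 hl2, omg_sq hl1 hl2, omg_sq hl1 hl2]
  nlinarith [mul_le_mul_of_nonneg_left h3 hl2.le]

lemma const_ex (l1 l2 N : ℝ) (hl1 : 0 < l1) (hl2 : 0 < l2) (hN : 0 ≤ N) (d : ℕ) :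
    ∃ c : ℝ, 1 ≤ c ∧ (∀ k : Sp d, 1 ≤ c * omg l1 l2 k ^ N) ∧
      (∀ k : Sp d, omg l1 l2 k ^ N ≤ c * omg l1 l2 k ^ (N + 2)) ∧
      (∀ k : Sp d, ‖k‖ * omg l1 l2 k ^ N ≤ c * omg l1 l2 k ^ (N + 2)) ∧
      (∀ k : Sp d, ‖k‖ ^ 2 * omg l1 l2 k ^ N ≤ c * omg l1 l2 k ^ (N + 2)) ∧
      (∀ k : Sp d, ‖k‖ ≤ c * omg l1 l2 k ^ (N + 2)) ∧
      (∀ x y z : Sp d, ‖z‖ ≤ ‖x‖ + ‖y‖ →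
        omg l1 l2 z ^ N ≤ c * (omg l1 l2 x ^ N + omg l1 l2 y ^ N)) := by
  set s := Real.sqrt l1 with hs
  have hs0 : 0 < s := Real.sqrt_pos.2 hl1
  set c1 := (s ^ N)⁻¹ with hc1
  have hc1p : 0 < c1 := by positivity
  set c2 := 1 / l1 + 1 / l2 with hc2
  have hc2p : 0 < c2 := by positivity
  have h2N : (0:ℝ) < 2 ^ N := by positivity
  have hp := fun k : Sp d => omg_pos' hl1 hl2 k
  have hwp : ∀ k : Sp d, 0 < omg l1 l2 k ^ N := fun k => Real.rpow_pos_of_pos (hp k) _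
  have hqp : ∀ k : Sp d, 0 < omg l1 l2 k ^ (N + 2) := fun k => Real.rpow_pos_of_pos (hp k) _
  have hw1 : ∀ k : Sp d, 1 ≤ c1 * omg l1 l2 k ^ N := by
    intro k
    rw [hc1, inv_mul_eq_div, one_le_div (by positivity)]
    refine Real.rpow_le_rpow hs0.le ?_ hN
    unfold omg
    apply Real.sqrt_le_sqrt
    nlinarith [mul_nonneg hl2.le (sq_nonneg ‖k‖)]
  have hsq : ∀ k : Sp d, 1 + ‖k‖ ^ 2 ≤ c2 * omg l1 l2 k ^ 2 := by
    intro k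
    rw [omg_sq hl1 hl2, hc2]
    have : (1 / l1 + 1 / l2) * (l1 + l2 * ‖k‖ ^ 2) = 1 + ‖k‖ ^ 2 + (l1 / l2 + l2 / l1 * ‖k‖ ^ 2) := by
      field_simp; ring
    rw [this]
    have : 0 ≤ l1 / l2 + l2 / l1 * ‖k‖ ^ 2 := by positivity
    linarith
  have hq : ∀ k : Sp d, omg l1 l2 k ^ (N + 2) = omg l1 l2 k ^ 2 * omg l1 l2 k ^ N := by
    intro k
    rw [Real.rpow_add (hp k), mul_comm]; norm_cast
  have hwq : ∀ k : Sp d, (1 + ‖k‖ ^ 2) * omg l1 l2 k ^ N ≤ c2 * omg l1 l2 k ^ (N + 2) := by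
    intro k
    rw [hq, ← mul_assoc]
    exact mul_le_mul_of_nonneg_right (hsq k) (hwp k).le
  have hk1 : ∀ k : Sp d, ‖k‖ ≤ 1 + ‖k‖ ^ 2 := fun k => by nlinarith [sq_nonneg (‖k‖ - 1), norm_nonneg k]
  have hcc : 0 < c1 * c2 := by positivity
  have mono : ∀ {x : ℝ} (k : Sp d), x ≤ c2 * omg l1 l2 k ^ (N + 2) →
      x ≤ (1 + c1 + c2 + c1 * c2 + 2 ^ N) * omg l1 l2 k ^ (N + 2) := fun {x} k h =>
    h.trans (mul_le_mul_of_nonneg_right (by linarith) (hqp k).le)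
  refine ⟨1 + c1 + c2 + c1 * c2 + 2 ^ N, by linarith, fun k => (hw1 k).trans ?_, fun k => mono k ?_,
    fun k => mono k ?_, fun k => mono k ?_, fun k => ?_, fun x y z h => ?_⟩
  · exact mul_le_mul_of_nonneg_right (by linarith) (hwp k).le
  · refine le_trans ?_ (hwq k)
    nlinarith [hwp k, mul_nonneg (sq_nonneg ‖k‖) (hwp k).le]
  · exact (mul_le_mul_of_nonneg_right (hk1 k) (hwp k).le).trans (hwq k)
  · refine le_trans ?_ (hwq k)
    nlinarith [hwp k]
  · have : ‖k‖ ≤ c1 * c2 * omg l1 l2 k ^ (N + 2) := by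
      have h1 := hk1 k
      have h2 := hwq k
      have h3 := hw1 k
      have h4 : 0 ≤ 1 + ‖k‖ ^ 2 := by positivity
      calc ‖k‖ ≤ (1 + ‖k‖ ^ 2) * 1 := by linarith
        _ ≤ (1 + ‖k‖ ^ 2) * (c1 * omg l1 l2 k ^ N) := by gcongr
        _ = c1 * ((1 + ‖k‖ ^ 2) * omg l1 l2 k ^ N) := by ring
        _ ≤ c1 * (c2 * omg l1 l2 k ^ (N + 2)) := by gcongr
        _ = _ := by ring
    exact this.trans (mul_le_mul_of_nonneg_right (by linarith) (hqp k).le)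
  · have h1 := omg_tri hl1 hl2 x y z h
    have hx := hwp x
    have hy := hwp y
    have h3 : omg l1 l2 z ^ N ≤ 2 ^ N * (omg l1 l2 x ^ N + omg l1 l2 y ^ N) := by
      rcases le_total (omg l1 l2 x) (omg l1 l2 y) with hxy | hxy
      · calc omg l1 l2 z ^ N ≤ (2 * omg l1 l2 y) ^ N :=
              Real.rpow_le_rpow (hp z).le (by linarith) hN
          _ = 2 ^ N * omg l1 l2 y ^ N := Real.mul_rpow (by norm_num) (hp y).le
          _ ≤ _ := by gcongr; linarith
      · calc omg l1 l2 z ^ N ≤ (2 * omg l1 l2 x) ^ N :=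
              Real.rpow_le_rpow (hp z).le (by linarith) hN
          _ = 2 ^ N * omg l1 l2 x ^ N := Real.mul_rpow (by norm_num) (hp x).le
          _ ≤ _ := by gcongr; linarith
    exact h3.trans (mul_le_mul_of_nonneg_right (by linarith) (by linarith))

lemma pair_h {c wx wy wz n ny qy hx py : ℝ} (hc : 1 ≤ c) (hwx : 0 ≤ wx) (hwy : 0 ≤ wy)
    (hn : 0 ≤ n) (hny : n ≤ ny) (hz : wz ≤ c * (wx + wy)) (h1 : ny ≤ c * qy)
    (h2 : ny * wy ≤ c * qy) (h3 : 1 ≤ c * wx) (hhx : 0 ≤ hx) (hpy : 0 ≤ py) :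
    wz * n * (hx * py) ≤ 2 * c ^ 3 * ((hx * wx) * (py * qy)) := by
  have hc0 : 0 ≤ c := by linarith
  have hny0 : 0 ≤ ny := hn.trans hny
  have hq : 0 ≤ c * qy := hny0.trans h1
  calc wz * n * (hx * py) ≤ (c * (wx + wy)) * n * (hx * py) := by gcongr
    _ ≤ (c * (wx + wy)) * ny * (hx * py) := by gcongr
    _ = c * (hx * wx) * py * ny + c * hx * py * (ny * wy) * 1 := by ring
    _ ≤ c * (hx * wx) * py * (c * qy) + c * hx * py * (c * qy) * (c * wx) := by gcongr
    _ = c ^ 2 * (hx * wx * py * qy) + c ^ 3 * (hx * wx * py * qy) := by ring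
    _ ≤ c ^ 3 * (hx * wx * py * qy) + c ^ 3 * (hx * wx * py * qy) := by
      have : 0 ≤ qy := by
        by_contra hneg; push Not at hneg
        have : c * qy < 0 := mul_neg_of_pos_of_neg (by linarith) hneg
        linarith
      gcongr
      norm_num
    _ = _ := by ring

lemma pair_p {c wx wy wz n ny qx qy px py : ℝ} (hc : 1 ≤ c) (hwx : 0 ≤ wx) (hwy : 0 ≤ wy)
    (hn : 0 ≤ n) (hny : n ≤ ny) (hz : wz ≤ c * (wx + wy)) (h1 : ny ≤ c * qy)
    (h2 : ny * wy ≤ c * qy) (h3 : 1 ≤ c * wx) (hpx : 0 ≤ px) (hpy : 0 ≤ py)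
    (h4 : wx ≤ c * qx) (hqy : 0 ≤ qy) :
    wz * n * (px * py) ≤ 2 * c ^ 4 * ((px * qx) * (py * qy)) := by
  refine (pair_h hc hwx hwy hn hny hz h1 h2 h3 hpx hpy).trans ?_
  have hc0 : 0 ≤ c := by linarith
  calc 2 * c ^ 3 * ((px * wx) * (py * qy)) ≤ 2 * c ^ 3 * ((px * (c * qx)) * (py * qy)) := by gcongr
    _ = _ := by ring

def Good (l1 l2 N : ℝ) (d : ℕ) (c : ℝ) : Prop :=
  1 ≤ c ∧ (∀ k : Sp d, 1 ≤ c * omg l1 l2 k ^ N) ∧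
      (∀ k : Sp d, omg l1 l2 k ^ N ≤ c * omg l1 l2 k ^ (N + 2)) ∧
      (∀ k : Sp d, ‖k‖ * omg l1 l2 k ^ N ≤ c * omg l1 l2 k ^ (N + 2)) ∧
      (∀ k : Sp d, ‖k‖ ^ 2 * omg l1 l2 k ^ N ≤ c * omg l1 l2 k ^ (N + 2)) ∧
      (∀ k : Sp d, ‖k‖ ≤ c * omg l1 l2 k ^ (N + 2)) ∧
      (∀ x y z : Sp d, ‖z‖ ≤ ‖x‖ + ‖y‖ →
        omg l1 l2 z ^ N ≤ c * (omg l1 l2 x ^ N + omg l1 l2 y ^ N))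

def Tker (l1 l2 : ℝ) {d : ℕ} (f : Sp d → ℝ) (a b e : Sp d) : ℝ :=
  Vsq a b e * Lor f (omg l1 l2 a - omg l1 l2 b - omg l1 l2 e) a b e *
    (f b * f e - f a * f b - f a * f e)

lemma good_p {l1 l2 N : ℝ} {d : ℕ} {c : ℝ} (hl1 : 0 < l1) (hl2 : 0 < l2) (hG : Good l1 l2 N d c)
    {p : Sp d → ℝ} (hp : ∀ k, 0 ≤ p k) {x y z : Sp d} {n : ℝ} (hn : 0 ≤ n) (hny : n ≤ ‖y‖)
    (hz : ‖z‖ ≤ ‖x‖ + ‖y‖) :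
    omg l1 l2 z ^ N * n * (p x * p y) ≤
      2 * c ^ 4 * ((p x * omg l1 l2 x ^ (N + 2)) * (p y * omg l1 l2 y ^ (N + 2))) := by
  obtain ⟨g1, g2, g3, g4, g5, g6, g7⟩ := hG
  exact pair_p g1 (Real.rpow_nonneg (omg_pos' hl1 hl2 x).le _)
    (Real.rpow_nonneg (omg_pos' hl1 hl2 y).le _) hn hny (g7 _ _ _ hz) (g6 y) (g4 y) (g2 x) (hp x) (hp y)
    (g3 x) (Real.rpow_nonneg (omg_pos' hl1 hl2 y).le _)

lemma good_h {l1 l2 N : ℝ} {d : ℕ} {c : ℝ} (hl1 : 0 < l1) (hl2 : 0 < l2) (hG : Good l1 l2 N d c)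
    {p h : Sp d → ℝ} (hp : ∀ k, 0 ≤ p k) (hh : ∀ k, 0 ≤ h k) {x y z : Sp d} {n : ℝ}
    (hn : 0 ≤ n) (hny : n ≤ ‖y‖) (hz : ‖z‖ ≤ ‖x‖ + ‖y‖) :
    omg l1 l2 z ^ N * n * (h x * p y) ≤
      2 * c ^ 3 * ((h x * omg l1 l2 x ^ N) * (p y * omg l1 l2 y ^ (N + 2))) := by
  obtain ⟨g1, g2, g3, g4, g5, g6, g7⟩ := hG
  exact pair_h g1 (Real.rpow_nonneg (omg_pos' hl1 hl2 x).le _)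
    (Real.rpow_nonneg (omg_pos' hl1 hl2 y).le _) hn hny (g7 _ _ _ hz) (g6 y) (g4 y) (g2 x) (hh x) (hp y)

lemma T_bound {l1 l2 N : ℝ} {d : ℕ} {c m : ℝ} (hl1 : 0 < l1) (hl2 : 0 < l2) (hG : Good l1 l2 N d c)
    {f : Sp d → ℝ} (hf : ∀ k, 0 ≤ f k) (hm : 0 < m) (hmf : m ≤ M0 f) {a b e z : Sp d}
    (hab : ‖z‖ ≤ ‖a‖ + ‖b‖) (hae : ‖z‖ ≤ ‖a‖ + ‖e‖) (hbe : ‖z‖ ≤ ‖b‖ + ‖e‖)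
    {P : Sp d → ℝ} (hP : P = fun x => f x * omg l1 l2 x ^ (N + 2)) :
    |omg l1 l2 z ^ N * Tker l1 l2 f a b e| ≤
      2 * c ^ 4 * (1 / m) * (P a * P b + P a * P e + P b * P e) := by
  subst hP
  have hw : 0 ≤ omg l1 l2 z ^ N := Real.rpow_nonneg (omg_pos' hl1 hl2 z).le _
  have hn := env_nonneg a b e
  have h1 := good_p hl1 hl2 hG hf hn (env_le2 a b e) hab
  have h2 := good_p hl1 hl2 hG hf hn (env_le3 a b e) hae
  have h3 := good_p hl1 hl2 hG hf hn (env_le3 a b e) hbe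
  have hK := ker_le hm hmf (omg l1 l2 a - omg l1 l2 b - omg l1 l2 e) a b e
  have hbr : |f b * f e - f a * f b - f a * f e| ≤ f a * f b + f a * f e + f b * f e := by
    have := mul_nonneg (hf a) (hf b)
    have := mul_nonneg (hf a) (hf e)
    have := mul_nonneg (hf b) (hf e)
    rw [abs_le]; constructor <;> linarith
  have hm' : 0 ≤ 1 / m := by positivity
  unfold Tker
  rw [abs_mul, abs_mul, abs_of_nonneg hw]
  calc _ ≤ omg l1 l2 z ^ N * ((env a b e * (1 / m)) * (f a * f b + f a * f e + f b * f e)) := by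
        gcongr
    _ = (1 / m) * (omg l1 l2 z ^ N * env a b e * (f a * f b) + omg l1 l2 z ^ N * env a b e * (f a * f e)
          + omg l1 l2 z ^ N * env a b e * (f b * f e)) := by ring
    _ ≤ (1 / m) * (2 * c ^ 4 * (_) + 2 * c ^ 4 * (_) + 2 * c ^ 4 * (_)) :=
        mul_le_mul_of_nonneg_left (add_le_add (add_le_add h1 h2) h3) hm'
    _ = _ := by ring

lemma prod_diff {f1 f2 g1 g2 : ℝ} (h1 : 0 ≤ f1) (h2 : 0 ≤ f2) (h3 : 0 ≤ g1) (h4 : 0 ≤ g2) :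
    |f1 * f2 - g1 * g2| ≤ |f1 - g1| * (f2 + g2) + |f2 - g2| * (f1 + g1) := by
  have e : f1 * f2 - g1 * g2 = (f1 - g1) * f2 + (f2 - g2) * g1 := by ring
  rw [e]
  refine (abs_add_le _ _).trans ?_
  rw [abs_mul, abs_mul, abs_of_nonneg h2, abs_of_nonneg h3]
  gcongr <;> linarith

lemma T_diff {l1 l2 N : ℝ} {d : ℕ} {c m : ℝ} (hl1 : 0 < l1) (hl2 : 0 < l2) (hG : Good l1 l2 N d c)
    {f g : Sp d → ℝ} (hf : ∀ k, 0 ≤ f k) (hg : ∀ k, 0 ≤ g k) (hm : 0 < m) (hmf : m ≤ M0 f)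
    (hmg : m ≤ M0 g) {a b e z : Sp d}
    (hab : ‖z‖ ≤ ‖a‖ + ‖b‖) (hae : ‖z‖ ≤ ‖a‖ + ‖e‖) (hbe : ‖z‖ ≤ ‖b‖ + ‖e‖)
    {P H : Sp d → ℝ} (hP : P = fun x => (f x + g x) * omg l1 l2 x ^ (N + 2))
    (hH : H = fun x => |f x - g x| * omg l1 l2 x ^ N) :
    |omg l1 l2 z ^ N * Tker l1 l2 f a b e - omg l1 l2 z ^ N * Tker l1 l2 g a b e| ≤
      2 * c ^ 4 * (|M0 f - M0 g| * (1 / m) ^ 2) * (P a * P b + P a * P e + P b * P e) +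
      2 * c ^ 3 * (1 / m) * ((H a * P b + H b * P a) + (H a * P e + H e * P a)
        + (H b * P e + H e * P b)) := by
  subst hP hH
  have hw : 0 ≤ omg l1 l2 z ^ N := Real.rpow_nonneg (omg_pos' hl1 hl2 z).le _
  have hn := env_nonneg a b e
  have n1 := env_le1 a b e
  have n2 := env_le2 a b e
  have n3 := env_le3 a b e
  have hp : ∀ k, 0 ≤ f k + g k := fun k => add_nonneg (hf k) (hg k)
  have hh : ∀ k, 0 ≤ |f k - g k| := fun k => abs_nonneg _
  have hba : ‖z‖ ≤ ‖b‖ + ‖a‖ := by linarith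
  have hea : ‖z‖ ≤ ‖e‖ + ‖a‖ := by linarith
  have heb : ‖z‖ ≤ ‖e‖ + ‖b‖ := by linarith
  have h1 := good_p hl1 hl2 hG hp hn n2 hab
  have h2 := good_p hl1 hl2 hG hp hn n3 hae
  have h3 := good_p hl1 hl2 hG hp hn n3 hbe
  have i1 := good_h hl1 hl2 hG hp hh hn n2 hab
  have i2 := good_h hl1 hl2 hG hp hh hn n1 hba
  have i3 := good_h hl1 hl2 hG hp hh hn n3 hae
  have i4 := good_h hl1 hl2 hG hp hh hn n1 hea
  have i5 := good_h hl1 hl2 hG hp hh hn n3 hbe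
  have i6 := good_h hl1 hl2 hG hp hh hn n2 heb
  have hK := ker_le hm hmg (omg l1 l2 a - omg l1 l2 b - omg l1 l2 e) a b e
  have hKd := ker_diff hm hmf hmg (omg l1 l2 a - omg l1 l2 b - omg l1 l2 e) a b e
  have hbr : |f b * f e - f a * f b - f a * f e| ≤ (f a + g a) * (f b + g b)
      + (f a + g a) * (f e + g e) + (f b + g b) * (f e + g e) := by
    have j1 := mul_nonneg (hf a) (hf b)
    have j2 := mul_nonneg (hf a) (hf e)
    have j3 := mul_nonneg (hf b) (hf e)
    have k1 : f a * f b ≤ (f a + g a) * (f b + g b) :=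
      mul_le_mul (by linarith [hg a]) (by linarith [hg b]) (hf b) (hp a)
    have k2 : f a * f e ≤ (f a + g a) * (f e + g e) :=
      mul_le_mul (by linarith [hg a]) (by linarith [hg e]) (hf e) (hp a)
    have k3 : f b * f e ≤ (f b + g b) * (f e + g e) :=
      mul_le_mul (by linarith [hg b]) (by linarith [hg e]) (hf e) (hp b)
    rw [abs_le]; constructor <;> linarith
  have hbd : |(f b * f e - f a * f b - f a * f e) - (g b * g e - g a * g b - g a * g e)| ≤
      (|f a - g a| * (f b + g b) + |f b - g b| * (f a + g a))
      + (|f a - g a| * (f e + g e) + |f e - g e| * (f a + g a))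
      + (|f b - g b| * (f e + g e) + |f e - g e| * (f b + g b)) := by
    have k1 := abs_le.1 (prod_diff (hf a) (hf b) (hg a) (hg b))
    have k2 := abs_le.1 (prod_diff (hf a) (hf e) (hg a) (hg e))
    have k3 := abs_le.1 (prod_diff (hf b) (hf e) (hg b) (hg e))
    rw [abs_le]; constructor <;> linarith [k1.1, k1.2, k2.1, k2.2, k3.1, k3.2]
  have hm' : 0 ≤ 1 / m := by positivity
  have hD : 0 ≤ |M0 f - M0 g| * (1 / m) ^ 2 := by positivity
  unfold Tker
  set Kf := Vsq a b e * Lor f (omg l1 l2 a - omg l1 l2 b - omg l1 l2 e) a b e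
  set Kg := Vsq a b e * Lor g (omg l1 l2 a - omg l1 l2 b - omg l1 l2 e) a b e
  set n := env a b e
  set W := omg l1 l2 z ^ N
  set Bf := f b * f e - f a * f b - f a * f e
  set Bg := g b * g e - g a * g b - g a * g e
  set D := |M0 f - M0 g| * (1 / m) ^ 2
  have e1 : W * (Kf * Bf) - W * (Kg * Bg) = W * ((Kf - Kg) * Bf) + W * (Kg * (Bf - Bg)) := by ring
  rw [e1]
  refine (abs_add_le _ _).trans (add_le_add ?_ ?_)
  · rw [abs_mul, abs_mul, abs_of_nonneg hw]
    calc _ ≤ W * ((n * D) * ((f a + g a) * (f b + g b)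
      + (f a + g a) * (f e + g e) + (f b + g b) * (f e + g e))) := by gcongr
      _ = D * (W * n * ((f a + g a) * (f b + g b)) + W * n * ((f a + g a) * (f e + g e))
          + W * n * ((f b + g b) * (f e + g e))) := by ring
      _ ≤ D * (2 * c ^ 4 * (_) + 2 * c ^ 4 * (_) + 2 * c ^ 4 * (_)) :=
          mul_le_mul_of_nonneg_left (add_le_add (add_le_add h1 h2) h3) hD
      _ = _ := by ring
  · rw [abs_mul, abs_mul, abs_of_nonneg hw]
    calc _ ≤ W * ((n * (1 / m)) * (_)) :=
          mul_le_mul_of_nonneg_left (mul_le_mul hK hbd (abs_nonneg _) (by positivity)) hw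
      _ = (1 / m) * ((W * n * (|f a - g a| * (f b + g b)) + W * n * (|f b - g b| * (f a + g a)))
          + (W * n * (|f a - g a| * (f e + g e)) + W * n * (|f e - g e| * (f a + g a)))
          + (W * n * (|f b - g b| * (f e + g e)) + W * n * (|f e - g e| * (f b + g b)))) := by ring
      _ ≤ (1 / m) * ((2 * c ^ 3 * (_) + 2 * c ^ 3 * (_)) + (2 * c ^ 3 * (_) + 2 * c ^ 3 * (_))
          + (2 * c ^ 3 * (_) + 2 * c ^ 3 * (_))) :=
          mul_le_mul_of_nonneg_left (add_le_add (add_le_add (add_le_add i1 i2) (add_le_add i3 i4))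
            (add_le_add i5 i6)) hm'
      _ = _ := by ring

abbrev vv (d : ℕ) : Measure (Sp d × Sp d) := (volume : Measure (Sp d)).prod volume

lemma int_pair {d : ℕ} {A B : Sp d × Sp d → Sp d}
    (h : MeasurePreserving (fun z => (A z, B z)) (vv d) (vv d)) {U V : Sp d → ℝ}
    (hU : Integrable U) (hV : Integrable V) :
    Integrable (fun z => U (A z) * V (B z)) (vv d) ∧
      ∫ z, U (A z) * V (B z) ∂(vv d) = (∫ x, U x) * ∫ x, V x := by
  have h1 : Integrable (fun z : Sp d × Sp d => U z.1 * V z.2) (vv d) := hU.mul_prod hV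
  refine ⟨h.integrable_comp_of_integrable h1, ?_⟩
  rw [← integral_prod_mul]
  have h2 : AEStronglyMeasurable (fun z : Sp d × Sp d => U z.1 * V z.2)
      (Measure.map (fun z => (A z, B z)) (vv d)) := by
    rw [h.map_eq]; exact h1.aestronglyMeasurable
  have := integral_map h.measurable.aemeasurable h2
  rw [h.map_eq] at this
  exact this.symm

/-- admissible parametrisations of the resonant triads -/
structure Adm (d : ℕ) (A B E : Sp d × Sp d → Sp d) : Prop where
  ab : MeasurePreserving (fun z => (A z, B z)) (vv d) (vv d)
  ae : MeasurePreserving (fun z => (A z, E z)) (vv d) (vv d)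
  be : MeasurePreserving (fun z => (B z, E z)) (vv d) (vv d)
  nab : ∀ z, ‖z.1‖ ≤ ‖A z‖ + ‖B z‖
  nae : ∀ z, ‖z.1‖ ≤ ‖A z‖ + ‖E z‖
  nbe : ∀ z, ‖z.1‖ ≤ ‖B z‖ + ‖E z‖

lemma adm1 (d : ℕ) : Adm d (fun z => z.1) (fun z => z.2) (fun z => z.1 - z.2) where
  ab := MeasurePreserving.id _
  ae := by
    have h1 : MeasurePreserving (Prod.map id Neg.neg : Sp d × Sp d → Sp d × Sp d) (vv d) (vv d) :=
      (MeasurePreserving.id _).prod (Measure.measurePreserving_neg _)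
    have h2 := (measurePreserving_prod_add (volume : Measure (Sp d)) volume).comp h1
    convert h2 using 2 with z
    simp [sub_eq_add_neg]
  be := by
    have h2 := (measurePreserving_prod_neg_add_swap (volume : Measure (Sp d)) volume)
    convert h2 using 3 with z
    abel
  nab := fun z => by linarith [norm_nonneg z.2]
  nae := fun z => by linarith [norm_nonneg (z.1 - z.2)]
  nbe := fun z => by
    have := norm_add_le z.2 (z.1 - z.2)
    simpa using this

lemma adm2 (d : ℕ) : Adm d (fun z => z.1 + z.2) (fun z => z.1) (fun z => z.2) where
  ab := by
    have h2 := (Measure.measurePreserving_swap (μ := (volume : Measure (Sp d))) (ν := (volume : Measure (Sp d)))).comp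
      (measurePreserving_prod_add (volume : Measure (Sp d)) volume)
    exact h2
  ae := measurePreserving_add_prod _ _
  be := MeasurePreserving.id _
  nab := fun z => by linarith [norm_nonneg (z.1 + z.2)]
  nae := fun z => by
    have := norm_sub_le (z.1 + z.2) z.2
    simpa using this
  nbe := fun z => by linarith [norm_nonneg z.2]

lemma T_meas {l1 l2 N : ℝ} {d : ℕ} {A B E : Sp d × Sp d → Sp d} (hA : Adm d A B E)
    {f : Sp d → ℝ} (hf : AEStronglyMeasurable f volume) :
    AEStronglyMeasurable (fun z : Sp d × Sp d => omg l1 l2 z.1 ^ N * Tker l1 l2 f (A z) (B z) (E z)) (vv d) := by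
  have qA : Measure.QuasiMeasurePreserving A (vv d) volume :=
    Measure.quasiMeasurePreserving_fst.comp hA.ab.quasiMeasurePreserving
  have qB : Measure.QuasiMeasurePreserving B (vv d) volume :=
    Measure.quasiMeasurePreserving_snd.comp hA.ab.quasiMeasurePreserving
  have qE : Measure.QuasiMeasurePreserving E (vv d) volume :=
    Measure.quasiMeasurePreserving_snd.comp hA.ae.quasiMeasurePreserving
  have fA := (hf.comp_quasiMeasurePreserving qA).aemeasurable
  have fB := (hf.comp_quasiMeasurePreserving qB).aemeasurable
  have fE := (hf.comp_quasiMeasurePreserving qE).aemeasurable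
  have mA := qA.measurable
  have mB := qB.measurable
  have mE := qE.measurable
  have hK : Measurable (fun z : Sp d × Sp d => omg l1 l2 z.1 ^ N * (Vsq (A z) (B z) (E z) *
      Lor f (omg l1 l2 (A z) - omg l1 l2 (B z) - omg l1 l2 (E z)) (A z) (B z) (E z))) := by
    unfold Vsq Lor Gam omg
    fun_prop
  have := (hK.aemeasurable (μ := vv d)).mul (((fB.mul fE).sub (fA.mul fB)).sub (fA.mul fE))
  refine AEMeasurable.aestronglyMeasurable ?_
  convert this using 2 with z
  simp [Tker, mul_assoc]

lemma T_int {l1 l2 N : ℝ} {d : ℕ} {c m : ℝ} (hl1 : 0 < l1) (hl2 : 0 < l2) (hG : Good l1 l2 N d c)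
    {A B E : Sp d × Sp d → Sp d} (hA : Adm d A B E)
    {f : Sp d → ℝ} (hf : ∀ k, 0 ≤ f k) (hfi : Integrable f)
    (hfN : Integrable (fun k => |f k| * omg l1 l2 k ^ (N + 2))) (hm : 0 < m) (hmf : m ≤ M0 f) :
    Integrable (fun z : Sp d × Sp d => omg l1 l2 z.1 ^ N * Tker l1 l2 f (A z) (B z) (E z)) (vv d) := by
  have hP : Integrable (fun k => f k * omg l1 l2 k ^ (N + 2)) := by
    simpa only [abs_of_nonneg (hf _)] using hfN
  refine Integrable.mono' ((((int_pair hA.ab hP hP).1.add (int_pair hA.ae hP hP).1).add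
    (int_pair hA.be hP hP).1).const_mul (2 * c ^ 4 * (1 / m))) (T_meas hA hfi.aestronglyMeasurable)
    (Eventually.of_forall fun z => ?_)
  exact T_bound hl1 hl2 hG hf hm hmf (hA.nab z) (hA.nae z) (hA.nbe z) rfl

lemma T_diff_int {l1 l2 N : ℝ} {d : ℕ} {c m M : ℝ} (hl1 : 0 < l1) (hl2 : 0 < l2)
    (hG : Good l1 l2 N d c) {A B E : Sp d × Sp d → Sp d} (hA : Adm d A B E)
    {f g : Sp d → ℝ} (hf : ∀ k, 0 ≤ f k) (hg : ∀ k, 0 ≤ g k) (hfi : Integrable f) (hgi : Integrable g)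
    (hfN : Integrable (fun k => |f k| * omg l1 l2 k ^ (N + 2)))
    (hgN : Integrable (fun k => |g k| * omg l1 l2 k ^ (N + 2)))
    (hfM : wnorm l1 l2 (N + 2) f ≤ M) (hgM : wnorm l1 l2 (N + 2) g ≤ M)
    (hH : Integrable (fun k => |f k - g k| * omg l1 l2 k ^ N))
    (hm : 0 < m) (hmf : m ≤ M0 f) (hmg : m ≤ M0 g) :
    ∫ z : Sp d × Sp d, |omg l1 l2 z.1 ^ N * Tker l1 l2 f (A z) (B z) (E z)
      - omg l1 l2 z.1 ^ N * Tker l1 l2 g (A z) (B z) (E z)| ∂(vv d) ≤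
    (24 * c ^ 5 * (1 / m) ^ 2 * M ^ 2 + 24 * c ^ 3 * (1 / m) * M) * wnorm l1 l2 N (fun k => f k - g k) := by
  have hc : 1 ≤ c := hG.1
  have hPf : Integrable (fun k => f k * omg l1 l2 k ^ (N + 2)) := by
    simpa only [abs_of_nonneg (hf _)] using hfN
  have hPg : Integrable (fun k => g k * omg l1 l2 k ^ (N + 2)) := by
    simpa only [abs_of_nonneg (hg _)] using hgN
  obtain ⟨P, hPd⟩ : ∃ P : Sp d → ℝ, P = fun x => (f x + g x) * omg l1 l2 x ^ (N + 2) := ⟨_, rfl⟩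
  obtain ⟨H, hHd⟩ : ∃ H : Sp d → ℝ, H = fun x => |f x - g x| * omg l1 l2 x ^ N := ⟨_, rfl⟩
  have hPi : Integrable P := by
    rw [hPd]; simp only [add_mul]; exact hPf.add hPg
  have hPM : ∫ x, P x ≤ 2 * M := by
    rw [hPd]; simp only [add_mul]
    rw [integral_add hPf hPg]
    unfold wnorm at hfM hgM
    simp only [abs_of_nonneg (hf _)] at hfM
    simp only [abs_of_nonneg (hg _)] at hgM
    linarith
  have hP0 : 0 ≤ ∫ x, P x := by
    rw [hPd]
    exact integral_nonneg fun x => mul_nonneg (add_nonneg (hf x) (hg x)) (Real.rpow_nonneg (omg_pos' hl1 hl2 x).le _)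
  have hHi : Integrable H := by rw [hHd]; exact hH
  have hHw : wnorm l1 l2 N (fun k => f k - g k) = ∫ x, H x := by rw [hHd]; rfl
  have hH0 : 0 ≤ ∫ x, H x := by
    rw [hHd]
    exact integral_nonneg fun x => mul_nonneg (abs_nonneg _) (Real.rpow_nonneg (omg_pos' hl1 hl2 x).le _)
  have hD : |M0 f - M0 g| ≤ c * ∫ x, H x := by
    unfold M0
    rw [← integral_sub hfi hgi, ← integral_const_mul]
    refine (abs_integral_le_integral_abs).trans (integral_mono (hfi.sub hgi).abs (hHi.const_mul c) fun x => ?_)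
    rw [hHd]
    have := mul_le_mul_of_nonneg_left (hG.2.1 x) (abs_nonneg (f x - g x))
    simp only
    linarith
  obtain ⟨a1, b1⟩ := int_pair hA.ab hPi hPi
  obtain ⟨a2, b2⟩ := int_pair hA.ae hPi hPi
  obtain ⟨a3, b3⟩ := int_pair hA.be hPi hPi
  obtain ⟨a4, b4⟩ := int_pair hA.ab hHi hPi
  obtain ⟨a5, b5⟩ := int_pair hA.ab hPi hHi
  obtain ⟨a6, b6⟩ := int_pair hA.ae hHi hPi
  obtain ⟨a7, b7⟩ := int_pair hA.ae hPi hHi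
  obtain ⟨a8, b8⟩ := int_pair hA.be hHi hPi
  obtain ⟨a9, b9⟩ := int_pair hA.be hPi hHi
  have hm' : 0 < 1 / m := by positivity
  set Y := |M0 f - M0 g|
  set IP := ∫ x, P x
  set IH := ∫ x, H x
  have I1 : Integrable (fun z => P (A z) * P (B z) + P (A z) * P (E z) + P (B z) * P (E z)) (vv d) :=
    (a1.add a2).add a3
  have J1 : ∫ z, (P (A z) * P (B z) + P (A z) * P (E z) + P (B z) * P (E z)) ∂(vv d) = 3 * (IP * IP) := by
    rw [integral_add (a1.fun_add a2) a3, integral_add a1 a2, b1, b2, b3]; ring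
  have I2 : Integrable (fun z => (H (A z) * P (B z) + P (A z) * H (B z)) + (H (A z) * P (E z) + P (A z) * H (E z))
      + (H (B z) * P (E z) + P (B z) * H (E z))) (vv d) :=
    ((a4.fun_add a5).fun_add (a6.fun_add a7)).fun_add (a8.fun_add a9)
  have J2 : ∫ z, ((H (A z) * P (B z) + P (A z) * H (B z)) + (H (A z) * P (E z) + P (A z) * H (E z))
      + (H (B z) * P (E z) + P (B z) * H (E z))) ∂(vv d) = 6 * (IH * IP) := by
    rw [integral_add ((a4.fun_add a5).fun_add (a6.fun_add a7)) (a8.fun_add a9), integral_add (a4.fun_add a5) (a6.fun_add a7),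
      integral_add a4 a5, integral_add a6 a7, integral_add a8 a9, b4, b5, b6, b7, b8, b9]; ring
  have key : ∫ z : Sp d × Sp d, |omg l1 l2 z.1 ^ N * Tker l1 l2 f (A z) (B z) (E z)
      - omg l1 l2 z.1 ^ N * Tker l1 l2 g (A z) (B z) (E z)| ∂(vv d) ≤
      2 * c ^ 4 * (Y * (1 / m) ^ 2) * (3 * (IP * IP)) + 2 * c ^ 3 * (1 / m) * (6 * (IH * IP)) := by
    rw [← J1, ← J2, ← integral_const_mul, ← integral_const_mul, ← integral_add (I1.const_mul _) (I2.const_mul _)]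
    refine integral_mono ((T_int hl1 hl2 hG hA hf hfi hfN hm hmf).sub
      (T_int hl1 hl2 hG hA hg hgi hgN hm hmg)).abs ((I1.const_mul _).add (I2.const_mul _)) fun z => ?_
    refine (T_diff hl1 hl2 hG hf hg hm hmf hmg (hA.nab z) (hA.nae z) (hA.nbe z) hPd hHd).trans (le_of_eq ?_)
    ring
  rw [hHw]
  refine key.trans ?_
  calc _ ≤ 2 * c ^ 4 * ((c * IH) * (1 / m) ^ 2) * (3 * ((2 * M) * (2 * M))) + 2 * c ^ 3 * (1 / m) * (6 * (IH * (2 * M))) := by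
        have : 0 ≤ 2 * M := hP0.trans hPM
        gcongr
    _ = _ := by ring

lemma Q_eq (l1 l2 N : ℝ) {d : ℕ} (f : Sp d → ℝ) (k : Sp d) :
    omg l1 l2 k ^ N * Qop l1 l2 f k =
      (∫ y, omg l1 l2 k ^ N * Tker l1 l2 f k y (k - y)) -
      2 * ∫ y, omg l1 l2 k ^ N * Tker l1 l2 f (k + y) k y := by
  rw [integral_const_mul, integral_const_mul]
  unfold Qop Tker
  rw [mul_sub]
  congr 1
  rw [mul_left_comm]
  congr 2
  simp only [mul_comm (f (k + _)) (f k)]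

lemma inner_diff {d : ℕ} {F G : Sp d × Sp d → ℝ} (hF : Integrable F (vv d)) (hG : Integrable G (vv d)) :
    Integrable (fun k => (∫ y, F (k, y)) - ∫ y, G (k, y)) ∧
      ∫ k, |(∫ y, F (k, y)) - ∫ y, G (k, y)| ≤ ∫ z, |F z - G z| ∂(vv d) := by
  have h1 : Integrable (fun k => (∫ y, F (k, y)) - ∫ y, G (k, y)) :=
    hF.integral_prod_left.sub hG.integral_prod_left
  have h2 : Integrable (fun z => |F z - G z|) (vv d) := (hF.sub hG).abs
  refine ⟨h1, ?_⟩
  rw [integral_prod _ h2]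
  refine integral_mono_ae h1.abs h2.integral_prod_left ?_
  filter_upwards [hF.prod_right_ae, hG.prod_right_ae] with k a b
  rw [← integral_sub a b]
  exact abs_integral_le_integral_abs

/-- One-sided Lipschitz property of the damped collision operator, where the
bracket [φ,ψ] = lim_{h→0⁻} h⁻¹(‖ψ + hφ‖_{L¹_N} − ‖ψ‖_{L¹_N}): (i) whenever the bracket
limit exists it is dominated by ∫ φ·sign(ψ)·ω^N; (ii) there is C_N > 0 such that for all
f, g in the class V_M, [Q̃[f] − Q̃[g], f − g] ≤ C_N·‖f − g‖_{L¹_N}. -/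
theorem one_sided_lipschitz {d : ℕ} (hd : 2 ≤ d) (l1 l2 N ν M M' : ℝ)
    (hl1 : 0 < l1) (hl2 : 0 < l2) (hN : 0 ≤ N) (hν : 0 < ν) (hM : 0 < M) (hM' : 0 < M') :
    (∀ φ ψ : Sp d → ℝ,
      Integrable (fun k => |φ k| * omg l1 l2 k ^ N) →
      Integrable (fun k => |ψ k| * omg l1 l2 k ^ N) →
      ∀ L : ℝ,
        Filter.Tendsto
          (fun h : ℝ =>
            (wnorm l1 l2 N (fun k => ψ k + h * φ k) - wnorm l1 l2 N ψ) / h)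
          (nhdsWithin 0 (Set.Iio 0)) (nhds L) →
        L ≤ ∫ k, φ k * Real.sign (ψ k) * omg l1 l2 k ^ N) ∧
    ∃ C > (0 : ℝ), ∀ f g : Sp d → ℝ,
      (∀ k, 0 ≤ f k) → (∀ k, 0 ≤ g k) →
      Integrable f → Integrable g →
      Integrable (fun k => |f k| * omg l1 l2 k ^ (N + 2)) →
      Integrable (fun k => |g k| * omg l1 l2 k ^ (N + 2)) →
      wnorm l1 l2 (N + 2) f ≤ M → wnorm l1 l2 (N + 2) g ≤ M →
      M' ≤ ∫ k, |f k| → M' ≤ ∫ k, |g k| →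
      ∀ L : ℝ,
        Filter.Tendsto
          (fun h : ℝ =>
            (wnorm l1 l2 N (fun k => (f k - g k) + h * (Qt l1 l2 ν f k - Qt l1 l2 ν g k)) -
              wnorm l1 l2 N (fun k => f k - g k)) / h)
          (nhdsWithin 0 (Set.Iio 0)) (nhds L) →
        L ≤ C * wnorm l1 l2 N (fun k => f k - g k) := by

  refine ⟨fun φ ψ hφ hψ L hL => part_one l1 l2 N hl1 hl2 φ ψ hφ hψ L hL, ?_⟩
  obtain ⟨c, hG⟩ := const_ex l1 l2 N hl1 hl2 hN d
  have hG : Good l1 l2 N d c := hG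
  have hc : 1 ≤ c := hG.1
  have hm' : 0 < 1 / M' := by positivity
  set K := 24 * c ^ 5 * (1 / M') ^ 2 * M ^ 2 + 24 * c ^ 3 * (1 / M') * M with hK
  have hKp : 0 < K := by positivity
  refine ⟨3 * K, by positivity, ?_⟩
  intro f g hf hg hfi hgi hfN hgN hfM hgM hmf hmg L hL
  have hmf : M' ≤ M0 f := by simpa only [M0, abs_of_nonneg (hf _)] using hmf
  have hmg : M' ≤ M0 g := by simpa only [M0, abs_of_nonneg (hg _)] using hmg
  have hw : ∀ k : Sp d, 0 < omg l1 l2 k ^ N := fun k => Real.rpow_pos_of_pos (omg_pos' hl1 hl2 k) _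
  have hwm : Measurable (fun k : Sp d => omg l1 l2 k ^ N) := (omg_meas l1 l2).pow_const N
  have hsum : Integrable (fun k => c * (|f k| * omg l1 l2 k ^ (N + 2) + |g k| * omg l1 l2 k ^ (N + 2))) :=
    (hfN.fun_add hgN).const_mul c
  have hfg : ∀ k, |f k - g k| ≤ |f k| + |g k| := fun k => abs_sub _ _
  have hH : Integrable (fun k => |f k - g k| * omg l1 l2 k ^ N) := by
    refine hsum.mono' ((hfi.sub hgi).abs.aestronglyMeasurable.mul hwm.aestronglyMeasurable)
      (Eventually.of_forall fun k => ?_)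
    rw [Real.norm_eq_abs, abs_of_nonneg (mul_nonneg (abs_nonneg _) (hw k).le)]
    calc _ ≤ (|f k| + |g k|) * omg l1 l2 k ^ N := mul_le_mul_of_nonneg_right (hfg k) (hw k).le
      _ ≤ (|f k| + |g k|) * (c * omg l1 l2 k ^ (N + 2)) :=
          mul_le_mul_of_nonneg_left (hG.2.2.1 k) (by positivity)
      _ = _ := by ring
  have hH2 : Integrable (fun k => 2 * ν * (‖k‖ ^ 2 * (f k - g k) * omg l1 l2 k ^ N)) := by
    refine Integrable.const_mul (hsum.mono' ?_ (Eventually.of_forall fun k => ?_)) _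
    · exact (((measurable_norm.pow_const 2).aestronglyMeasurable).mul
        (hfi.sub hgi).aestronglyMeasurable).mul hwm.aestronglyMeasurable
    rw [norm_mul, norm_mul, Real.norm_eq_abs, Real.norm_eq_abs, Real.norm_eq_abs,
      abs_of_nonneg (hw k).le, abs_of_nonneg (show 0 ≤ ‖k‖ ^ 2 by positivity)]
    calc _ = |f k - g k| * (‖k‖ ^ 2 * omg l1 l2 k ^ N) := by ring
      _ ≤ (|f k| + |g k|) * (c * omg l1 l2 k ^ (N + 2)) :=
          mul_le_mul (hfg k) (hG.2.2.2.2.1 k) (mul_nonneg (by positivity) (hw k).le) (by positivity)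
      _ = _ := by ring
  have d1 := T_diff_int hl1 hl2 hG (adm1 d) hf hg hfi hgi hfN hgN hfM hgM hH hM' hmf hmg
  have d2 := T_diff_int hl1 hl2 hG (adm2 d) hf hg hfi hgi hfN hgN hfM hgM hH hM' hmf hmg
  obtain ⟨i1, e1⟩ := inner_diff (T_int hl1 hl2 hG (adm1 d) hf hfi hfN hM' hmf)
    (T_int hl1 hl2 hG (adm1 d) hg hgi hgN hM' hmg)
  obtain ⟨i2, e2⟩ := inner_diff (T_int hl1 hl2 hG (adm2 d) hf hfi hfN hM' hmf)
    (T_int hl1 hl2 hG (adm2 d) hg hgi hgN hM' hmg)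
  have d1 := e1.trans d1
  have d2 := e2.trans d2
  simp only at i1 i2 d1 d2
  rw [← hK] at d1 d2
  clear e1 e2
  set W := wnorm l1 l2 N (fun k => f k - g k)
  obtain ⟨J1, hJ1⟩ : ∃ J : Sp d → ℝ, J = fun k => (∫ y, omg l1 l2 k ^ N * Tker l1 l2 f k y (k - y))
    - ∫ y, omg l1 l2 k ^ N * Tker l1 l2 g k y (k - y) := ⟨_, rfl⟩
  obtain ⟨J2, hJ2⟩ : ∃ J : Sp d → ℝ, J = fun k => (∫ y, omg l1 l2 k ^ N * Tker l1 l2 f (k + y) k y)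
    - ∫ y, omg l1 l2 k ^ N * Tker l1 l2 g (k + y) k y := ⟨_, rfl⟩
  have i1 : Integrable J1 := by rw [hJ1]; exact i1
  have i2 : Integrable J2 := by rw [hJ2]; exact i2
  have d1 : ∫ k, |J1 k| ≤ K * W := by rw [hJ1]; exact d1
  have d2 : ∫ k, |J2 k| ≤ K * W := by rw [hJ2]; exact d2
  have hQ : ∀ k, (Qt l1 l2 ν f k - Qt l1 l2 ν g k) * omg l1 l2 k ^ N =
      (J1 k - 2 * J2 k) - 2 * ν * (‖k‖ ^ 2 * (f k - g k) * omg l1 l2 k ^ N) := by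
    intro k
    have a := Q_eq l1 l2 N f k
    have b := Q_eq l1 l2 N g k
    rw [hJ1, hJ2]
    unfold Qt
    simp only
    linarith
  have iJ : Integrable (fun k => |J1 k| + 2 * |J2 k|) := i1.abs.fun_add (i2.abs.const_mul 2)
  have hΦ : Integrable (fun k => |Qt l1 l2 ν f k - Qt l1 l2 ν g k| * omg l1 l2 k ^ N) := by
    have : (fun k => |Qt l1 l2 ν f k - Qt l1 l2 ν g k| * omg l1 l2 k ^ N) =
        fun k => |(J1 k - 2 * J2 k) - 2 * ν * (‖k‖ ^ 2 * (f k - g k) * omg l1 l2 k ^ N)| := by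
      funext k
      rw [← hQ, abs_mul, abs_of_pos (hw k)]
    rw [this]
    exact ((i1.sub (i2.const_mul 2)).sub hH2).abs
  refine (part_one l1 l2 N hl1 hl2 _ _ hΦ hH L hL).trans ?_
  have hfin : ∫ k, (|J1 k| + 2 * |J2 k|) ≤ 3 * K * W := by
    rw [integral_add i1.abs (i2.abs.const_mul 2), integral_const_mul]
    linarith
  refine le_trans ?_ hfin
  by_cases hi : Integrable (fun k => (Qt l1 l2 ν f k - Qt l1 l2 ν g k) * Real.sign (f k - g k) * omg l1 l2 k ^ N)
  · refine integral_mono hi iJ fun k => ?_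
    simp only
    have e : (Qt l1 l2 ν f k - Qt l1 l2 ν g k) * Real.sign (f k - g k) * omg l1 l2 k ^ N =
        Real.sign (f k - g k) * (J1 k - 2 * J2 k)
          - 2 * ν * ‖k‖ ^ 2 * omg l1 l2 k ^ N * (Real.sign (f k - g k) * (f k - g k)) := by
      rw [mul_right_comm, hQ]; ring
    rw [e]
    have hs : 0 ≤ Real.sign (f k - g k) * (f k - g k) := Real.sign_mul_nonneg _
    have h1 : 0 ≤ 2 * ν * ‖k‖ ^ 2 * omg l1 l2 k ^ N * (Real.sign (f k - g k) * (f k - g k)) := by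
      have := (hw k).le
      positivity
    have h2 : Real.sign (f k - g k) * (J1 k - 2 * J2 k) ≤ |J1 k| + 2 * |J2 k| := by
      have a1 := abs_le.1 (le_refl |J1 k|)
      have a2 := abs_le.1 (le_refl |J2 k|)
      rcases Real.sign_apply_eq (f k - g k) with h | h | h <;> rw [h]
      · linarith [a1.1, a1.2, a2.1, a2.2]
      · rw [zero_mul]; positivity
      · linarith [a1.1, a1.2, a2.1, a2.2]
    linarith
  · rw [integral_undef hi]
    exact integral_nonneg fun k => by positivity
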